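/- arXiv:2106.03277 — 4 statements merged into one kernel-verified Lean document; each statement's English description precedes it below -/
import Mathlib

section
/- Let (A,·,α) be a multiplicative commutative Hom-associative algebra and let D be a derivation of (A,·,α) (so αD = Dα and D(x·y) = D(x)·y + x·D(y)). Define {x,y} = x·D(y) − D(x)·y. Then (A,·,{·,·},α) is a transposed Hom-Poisson algebra: (A,{·,·},α) is a Hom-Lie algebra and the transposed Hom-Leibniz identity 2α(z)·{x,y} = {z·x,α(y)} + {α(x),z·y} holds for all x,y,z ∈ A. -/
/-!
In a commutative Hom-associative algebra the triple product `α x · (y · z)` is symmetric in its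
three arguments. Hence `{z · x, α y}` and `{α x, z · y}` differ from `α z · {x, y}` by
`∓ α (D z) · (x · y)`, and these corrections cancel in the transposed Hom-Leibniz identity. For the
Hom-Jacobi identity, `D {y, z} = y · D² z - D² y · z` shows that `{α x, {y, z}} = P x y z - P z x y`
with `P x y z = α x · (y · D² z) + α z · (D x · D y)`, so the cyclic sum telescopes.
-/

section

variable {R A : Type*} [CommSemiring R] [AddCommGroup A] [Module R A]

/-- The product `mul` and the twisting map `α` form a commutative Hom-associative algebra. The twist
enters as a bare function, so linear twists are covered through their coercion. -/
structure IsCommHomAssoc (mul : A →ₗ[R] A →ₗ[R] A) (α : A → A) : Prop where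
  comm (x y : A) : mul x y = mul y x
  assoc (x y z : A) : mul (mul x y) (α z) = mul (α x) (mul y z)

/-- `D` is a derivation of the Hom-algebra with product `mul` and twisting map `α`. -/
structure IsHomDerivation (mul : A →ₗ[R] A →ₗ[R] A) (α : A → A) (D : A →ₗ[R] A) : Prop where
  map_twist (x : A) : α (D x) = D (α x)
  map_mul (x y : A) : D (mul x y) = mul (D x) y + mul x (D y)

/-- The bracket `br` and the twisting map `α` form a Hom-Lie algebra. As in `IsCommHomAssoc`,
bilinearity is bundled into `br` and the twist is a bare function. -/
structure IsHomLie (br : A →ₗ[R] A →ₗ[R] A) (α : A → A) : Prop where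
  skew (x y : A) : br x y = -br y x
  jacobi (x y z : A) : br (α x) (br y z) + br (α y) (br z x) + br (α z) (br x y) = 0

/-- The product `mul`, the bracket `br` and the twisting map `α` form a transposed Hom-Poisson
algebra; `leibniz` is the transposed Hom-Leibniz identity. -/
structure IsTransposedHomPoisson (mul br : A →ₗ[R] A →ₗ[R] A) (α : A → A) : Prop
    extends IsCommHomAssoc mul α, IsHomLie br α where
  leibniz (x y z : A) :
    (2 : R) • mul (α z) (br x y) = br (mul z x) (α y) + br (α x) (mul z y)

/-- The bracket `{x, y} = x · D y - D x · y` that a linear map `D` induces on an algebra with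
product `mul`, as a bilinear map. -/
def derivationBracket (mul : A →ₗ[R] A →ₗ[R] A) (D : A →ₗ[R] A) : A →ₗ[R] A →ₗ[R] A :=
  mul.compl₂ D - mul ∘ₗ D

variable {mul : A →ₗ[R] A →ₗ[R] A} {α : A → A} {D : A →ₗ[R] A}

namespace IsCommHomAssoc

theorem triple_rotate (h : IsCommHomAssoc mul α) (x y z : A) :
    mul (α x) (mul y z) = mul (α z) (mul x y) := by
  rw [← h.assoc, h.comm]

theorem triple_left_comm (h : IsCommHomAssoc mul α) (x y z : A) :
    mul (α x) (mul y z) = mul (α y) (mul x z) := by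
  rw [h.comm y z, h.triple_rotate]

end IsCommHomAssoc

theorem derivationBracket_apply (mul : A →ₗ[R] A →ₗ[R] A) (D : A →ₗ[R] A) (x y : A) :
    derivationBracket mul D x y = mul x (D y) - mul (D x) y :=
  rfl

theorem derivationBracket_skew (hcomm : ∀ x y, mul x y = mul y x) (x y : A) :
    derivationBracket mul D x y = -derivationBracket mul D y x := by
  rw [derivationBracket_apply, derivationBracket_apply, hcomm x, hcomm (D x), neg_sub]

theorem map_derivationBracket (hD : ∀ x y, D (mul x y) = mul (D x) y + mul x (D y)) (x y : A) :
    D (derivationBracket mul D x y) = mul x (D (D y)) - mul (D (D x)) y := by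
  rw [derivationBracket_apply, map_sub, hD, hD]
  abel

theorem derivationBracket_mul_twist (h : IsCommHomAssoc mul α) (hD : IsHomDerivation mul α D)
    (x y z : A) :
    derivationBracket mul D (mul z x) (α y) =
      mul (α z) (derivationBracket mul D x y) - mul (α (D z)) (mul x y) := by
  simp only [derivationBracket_apply, ← hD.map_twist, hD.map_mul, map_add, map_sub,
    LinearMap.add_apply, h.assoc]
  abel

theorem derivationBracket_twist_mul (h : IsCommHomAssoc mul α) (hD : IsHomDerivation mul α D)
    (x y z : A) :
    derivationBracket mul D (α x) (mul z y) =
      mul (α z) (derivationBracket mul D x y) + mul (α (D z)) (mul x y) := by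
  rw [derivationBracket_skew h.comm, derivationBracket_mul_twist h hD,
    derivationBracket_skew h.comm y x, h.comm y x, map_neg]
  abel

theorem derivationBracket_twist_derivationBracket (h : IsCommHomAssoc mul α)
    (hD : IsHomDerivation mul α D) (x y z : A) :
    derivationBracket mul D (α x) (derivationBracket mul D y z) =
      (mul (α x) (mul y (D (D z))) + mul (α z) (mul (D x) (D y))) -
        (mul (α z) (mul x (D (D y))) + mul (α y) (mul (D z) (D x))) := by
  rw [derivationBracket_apply mul D (α x), map_derivationBracket hD.map_mul, ← hD.map_twist,
    derivationBracket_apply, map_sub, map_sub, h.triple_rotate x (D (D y)) z,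
    h.triple_left_comm (D x) y (D z), h.comm (D x) (D z), h.triple_rotate (D x) (D y) z]
  abel

theorem isHomLie_derivationBracket (h : IsCommHomAssoc mul α) (hD : IsHomDerivation mul α D) :
    IsHomLie (derivationBracket mul D) α where
  skew := derivationBracket_skew h.comm
  jacobi x y z := by
    simp only [derivationBracket_twist_derivationBracket h hD]
    abel

theorem transposedHomPoisson_of_derivation_general (h : IsCommHomAssoc mul α)
    (hD : IsHomDerivation mul α D) :
    IsTransposedHomPoisson mul (derivationBracket mul D) α where
  toIsCommHomAssoc := h
  toIsHomLie := isHomLie_derivationBracket h hD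
  leibniz x y z := by
    rw [derivationBracket_mul_twist h hD, derivationBracket_twist_mul h hD,
      sub_add_add_cancel, two_smul]

end

/-- A derivation of a multiplicative commutative Hom-associative
algebra yields a transposed Hom-Poisson algebra via {x,y} = x·D(y) − D(x)·y. -/
theorem transposedHomPoisson_of_derivation
    {K A : Type*} [Field K] [CharZero K] [AddCommGroup A] [Module K A]
    (mul : A →ₗ[K] A →ₗ[K] A) (α : A →ₗ[K] A)
    (hcomm : ∀ x y : A, mul x y = mul y x)
    (hassoc : ∀ x y z : A, mul (mul x y) (α z) = mul (α x) (mul y z))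
    (hmult : ∀ x y : A, α (mul x y) = mul (α x) (α y))
    (D : A →ₗ[K] A)
    (hDα : ∀ x : A, α (D x) = D (α x))
    (hD : ∀ x y : A, D (mul x y) = mul (D x) y + mul x (D y))
    (br : A → A → A)
    (hbr : ∀ x y : A, br x y = mul x (D y) - mul (D x) y) :
    (∀ x y : A, br x y = - br y x) ∧
    (∀ x y z : A, br (α x) (br y z) + br (α y) (br z x) + br (α z) (br x y) = 0) ∧
    (∀ x y z : A, (2 : K) • mul (α z) (br x y) = br (mul z x) (α y) + br (α x) (mul z y)) := by
  obtain rfl : br = fun x y => derivationBracket mul D x y := funext₂ hbr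
  have h := transposedHomPoisson_of_derivation_general (α := α) ⟨hcomm, hassoc⟩ ⟨hDα, hD⟩
  exact ⟨h.skew, h.jacobi, h.leibniz⟩
end

section
/- Let (A,·,{·,·}) be a transposed Poisson algebra and fix h ∈ A. Define the linear map α_h : A → A by α_h(x) = h·x. Then (A,{·,·},α_h) is a Hom-Lie algebra, i.e. {α_h(x),{y,z}} + {α_h(y),{z,x}} + {α_h(z),{x,y}} = 0 for all x,y,z ∈ A. -/
/-!
Left multiplication `φ` by `h` is a `½`-derivation of the bracket:
`2 φ[x, y] = [φ x, y] + [x, φ y]`. Let `S` and `T` be the sums of `[φ x, [y, z]]` and of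
`[x, φ[y, z]]` over the cyclic permutations of `x, y, z`. Applying `2 φ` to the Jacobi identity
gives `S + T = 0`, and summing the Jacobi identities of `(φ x, y, z)`, `(φ y, z, x)`, `(φ z, x, y)`
gives `S + 2 T = 0`. Hence `S = 2 (S + T) - (S + 2 T) = 0`.
-/

section HalfDerivation

variable {R A : Type*} [CommRing R] [AddCommGroup A] [Module R A]

/-- The Jacobi identity for the bracket `br` twisted by `φ`, as in the definition of a Hom-Lie
algebra. The ordinary Jacobi identity is the case `φ = LinearMap.id`. -/
def HomJacobi (br : A →ₗ[R] A →ₗ[R] A) (φ : A →ₗ[R] A) : Prop :=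
  ∀ x y z : A, br (φ x) (br y z) + br (φ y) (br z x) + br (φ z) (br x y) = 0

/-- `φ` is a `½`-derivation of the bracket `br`. The defining equation is multiplied by `2`, so that
it makes sense over every commutative ring. -/
def IsHalfDerivation (br : A →ₗ[R] A →ₗ[R] A) (φ : A →ₗ[R] A) : Prop :=
  ∀ x y : A, (2 : R) • φ (br x y) = br (φ x) y + br x (φ y)

variable {br : A →ₗ[R] A →ₗ[R] A} {φ : A →ₗ[R] A}

namespace IsHalfDerivation

theorem two_smul_br_apply_br (hφ : IsHalfDerivation br φ) (x y z : A) :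
    (2 : R) • br x (φ (br y z)) = br x (br (φ y) z) + br x (br y (φ z)) := by
  rw [← map_smul, hφ, map_add]

theorem cyclic_sum_add_cyclic_sum_eq_zero (hφ : IsHalfDerivation br φ)
    (hjac : HomJacobi br LinearMap.id) (x y z : A) :
    (br (φ x) (br y z) + br (φ y) (br z x) + br (φ z) (br x y)) +
      (br x (φ (br y z)) + br y (φ (br z x)) + br z (φ (br x y))) = 0 := by
  have jacobi : br x (br y z) + br y (br z x) + br z (br x y) = 0 := hjac x y z
  calc
    _ = (br (φ x) (br y z) + br x (φ (br y z))) + (br (φ y) (br z x) + br y (φ (br z x))) +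
          (br (φ z) (br x y) + br z (φ (br x y))) := by abel
    _ = (2 : R) • φ (br x (br y z) + br y (br z x) + br z (br x y)) := by
      simp only [← hφ _ _, map_add, smul_add]
    _ = 0 := by rw [jacobi, map_zero, smul_zero]

theorem cyclic_sum_add_two_smul_cyclic_sum_eq_zero (hφ : IsHalfDerivation br φ)
    (hjac : HomJacobi br LinearMap.id) (x y z : A) :
    (br (φ x) (br y z) + br (φ y) (br z x) + br (φ z) (br x y)) +
      (2 : R) • (br x (φ (br y z)) + br y (φ (br z x)) + br z (φ (br x y))) = 0 := by
  have jacobi (a b c : A) : br a (br b c) + br b (br c a) + br c (br a b) = 0 := hjac a b c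
  calc
    _ = (br (φ x) (br y z) + br y (br z (φ x)) + br z (br (φ x) y)) +
          (br (φ y) (br z x) + br z (br x (φ y)) + br x (br (φ y) z)) +
          (br (φ z) (br x y) + br x (br y (φ z)) + br y (br (φ z) x)) := by
      simp only [smul_add, hφ.two_smul_br_apply_br]
      abel
    _ = 0 := by simp only [jacobi, add_zero]

end IsHalfDerivation

theorem homLie_of_transposedPoisson_alpha_h_general (hjac : HomJacobi br LinearMap.id)
    (hφ : IsHalfDerivation br φ) : HomJacobi br φ := by
  intro x y z
  have sum_add := hφ.cyclic_sum_add_cyclic_sum_eq_zero hjac x y z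
  have sum_add_two_smul := hφ.cyclic_sum_add_two_smul_cyclic_sum_eq_zero hjac x y z
  linear_combination (norm := module) (2 : R) • sum_add - sum_add_two_smul

end HalfDerivation

/-- In a transposed Poisson algebra, for any fixed h, the map
α_h(x) = h·x makes (A,{·,·},α_h) a Hom-Lie algebra. -/
theorem homLie_of_transposedPoisson_alpha_h
    {K A : Type*} [Field K] [CharZero K] [AddCommGroup A] [Module K A]
    (mul : A →ₗ[K] A →ₗ[K] A) (br : A →ₗ[K] A →ₗ[K] A)
    (hcomm : ∀ x y : A, mul x y = mul y x)
    (hassoc : ∀ x y z : A, mul (mul x y) z = mul x (mul y z))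
    (hskew : ∀ x y : A, br x y = - br y x)
    (hjac : ∀ x y z : A, br x (br y z) + br y (br z x) + br z (br x y) = 0)
    (hleib : ∀ x y z : A, (2 : K) • mul z (br x y) = br (mul z x) y + br x (mul z y))
    (h : A) :
    ∀ x y z : A,
      br (mul h x) (br y z) + br (mul h y) (br z x) + br (mul h z) (br x y) = 0 :=
  homLie_of_transposedPoisson_alpha_h_general hjac fun x y => hleib x y h
end

section
/- Let (A,·,∗) be a pre-Lie Poisson algebra and α : A → A a morphism of pre-Lie Poisson algebras (α(x·y) = α(x)·α(y) and α(x∗y) = α(x)∗α(y)). Define x ·_α y = α(x·y) and x ∗_α y = α(x∗y). Then (A, ·_α, ∗_α, α) is a Hom-pre-Lie Poisson algebra. Moreover, if (A',·',∗') is another pre-Lie Poisson algebra with morphism α', and f : A → A' is a morphism of pre-Lie Poisson algebras with f∘α = α'∘f, then f is a morphism of the Hom-pre-Lie Poisson algebras (A,·_α,∗_α,α) → (A',·'_{α'},∗'_{α'},α'). -/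
/-!
Apart from commutativity, every term of the defining identities is a product of three elements,
built from two operations. If `β` is multiplicative for the outer operation, then twisting both
operations and applying `β` to the outer factor gives the image of the term under `β ∘ β`. As `β`
is additive, the twisted identities are therefore the images under `β ∘ β` of the original ones.
-/

open Function

/-- The Yau twist `(x, y) ↦ β (x · y)` of a binary operation along a self-map `β`. -/
def yauTwist {A : Type*} (β : A → A) (op : A → A → A) : A → A → A :=
  fun x y ↦ β (op x y)

/-- The identities of a Hom-pre-Lie Poisson algebra `(A, ·, ∗, α)`, for operations that need not be
bilinear. A pre-Lie Poisson algebra is the case `α = id`. -/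
structure IsHomPreLiePoisson {A : Type*} [Sub A] (mul star : A → A → A) (α : A → A) : Prop where
  mul_comm : ∀ x y, mul x y = mul y x
  mul_assoc : ∀ x y z, mul (mul x y) (α z) = mul (α x) (mul y z)
  star_preLie : ∀ x y z,
    star (star x y) (α z) - star (α x) (star y z) = star (star y x) (α z) - star (α y) (star x z)
  mul_star_assoc : ∀ x y z, star (mul x y) (α z) = mul (α x) (star y z)
  star_commutator_mul : ∀ x y z,
    mul (star x y) (α z) - mul (star y x) (α z) = star (α x) (mul y z) - star (α y) (mul x z)

section Twist

variable {A A' : Type*}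

theorem yauTwist_yauTwist_left {β : A → A} {op₂ : A → A → A} (hβ : Semiconj₂ β op₂ op₂)
    (op₁ : A → A → A) (x y z : A) :
    yauTwist β op₂ (yauTwist β op₁ x y) (β z) = β (β (op₂ (op₁ x y) z)) :=
  congrArg β (hβ _ _).symm

theorem yauTwist_yauTwist_right {β : A → A} {op₂ : A → A → A} (hβ : Semiconj₂ β op₂ op₂)
    (op₁ : A → A → A) (x y z : A) :
    yauTwist β op₂ (β x) (yauTwist β op₁ y z) = β (β (op₂ x (op₁ y z))) :=
  congrArg β (hβ _ _).symm

theorem semiconj₂_yauTwist {f : A → A'} {op : A → A → A} {op' : A' → A' → A'} {β : A → A}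
    {β' : A' → A'} (hop : Semiconj₂ f op op') (hβ : Semiconj f β β') :
    Semiconj₂ f (yauTwist β op) (yauTwist β' op') :=
  fun x y ↦ (hβ (op x y)).trans (congrArg β' (hop x y))

theorem IsHomPreLiePoisson.yauTwist [AddGroup A] {mul star : A → A → A} {α : A → A}
    (h : IsHomPreLiePoisson mul star α) {F : Type*} [FunLike F A A] [AddMonoidHomClass F A A]
    {β : F} (hmul : Semiconj₂ β mul mul) (hstar : Semiconj₂ β star star) :
    IsHomPreLiePoisson (yauTwist β mul) (yauTwist β star) (β ∘ α) where
  mul_comm x y := congrArg β (h.mul_comm x y)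
  mul_assoc x y z := by
    simp only [comp_apply, yauTwist_yauTwist_left hmul, yauTwist_yauTwist_right hmul, h.mul_assoc]
  star_preLie x y z := by
    simp only [comp_apply, yauTwist_yauTwist_left hstar, yauTwist_yauTwist_right hstar,
      ← map_sub, h.star_preLie x y z]
  mul_star_assoc x y z := by
    simp only [comp_apply, yauTwist_yauTwist_left hstar, yauTwist_yauTwist_right hmul,
      h.mul_star_assoc]
  star_commutator_mul x y z := by
    simp only [comp_apply, yauTwist_yauTwist_left hmul, yauTwist_yauTwist_right hstar,
      ← map_sub, h.star_commutator_mul]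

theorem yauTwist_preLiePoisson_general [AddGroup A] {mul star : A → A → A} {α : A → A}
    (h : IsHomPreLiePoisson mul star α) {F : Type*} [FunLike F A A] [AddMonoidHomClass F A A]
    {β : F} (hmul : Semiconj₂ β mul mul) (hstar : Semiconj₂ β star star)
    {mul' star' : A' → A' → A'} {α' β' : A' → A'} {f : A → A'}
    (hfmul : Semiconj₂ f mul mul') (hfstar : Semiconj₂ f star star')
    (hfα : Semiconj f α α') (hfβ : Semiconj f β β') :
    IsHomPreLiePoisson (yauTwist β mul) (yauTwist β star) (β ∘ α) ∧
      Semiconj₂ f (yauTwist β mul) (yauTwist β' mul') ∧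
      Semiconj₂ f (yauTwist β star) (yauTwist β' star') ∧
      Semiconj f (β ∘ α) (β' ∘ α') :=
  ⟨h.yauTwist hmul hstar, semiconj₂_yauTwist hfmul hfβ, semiconj₂_yauTwist hfstar hfβ,
    hfβ.comp_right hfα⟩

end Twist

/-- The Yau twist of a pre-Lie Poisson algebra along a morphism α
is a Hom-pre-Lie Poisson algebra, and morphisms commuting with the twisting maps
are carried to morphisms of the twisted algebras. -/
theorem yauTwist_preLiePoisson
    {K A A' : Type*} [Field K] [CharZero K]
    [AddCommGroup A] [Module K A] [AddCommGroup A'] [Module K A']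
    -- pre-Lie Poisson algebra (A, mul, star)
    (mul : A →ₗ[K] A →ₗ[K] A) (star : A →ₗ[K] A →ₗ[K] A)
    (hcomm : ∀ x y : A, mul x y = mul y x)
    (hassoc : ∀ x y z : A, mul (mul x y) z = mul x (mul y z))
    (hpre : ∀ x y z : A,
      star (star x y) z - star x (star y z) = star (star y x) z - star y (star x z))
    (hcompat1 : ∀ x y z : A, star (mul x y) z = mul x (star y z))
    (hcompat2 : ∀ x y z : A,
      mul (star x y) z - mul (star y x) z = star x (mul y z) - star y (mul x z))
    -- morphism α of (A, mul, star)
    (α : A →ₗ[K] A)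
    (hαm : ∀ x y : A, α (mul x y) = mul (α x) (α y))
    (hαs : ∀ x y : A, α (star x y) = star (α x) (α y))
    -- twisted operations on A
    (mulα starα : A → A → A)
    (hmulα : ∀ x y : A, mulα x y = α (mul x y))
    (hstarα : ∀ x y : A, starα x y = α (star x y))
    -- pre-Lie Poisson algebra (A', mul', star')
    (mul' : A' →ₗ[K] A' →ₗ[K] A') (star' : A' →ₗ[K] A' →ₗ[K] A')
    (hcomm' : ∀ x y : A', mul' x y = mul' y x)
    (hassoc' : ∀ x y z : A', mul' (mul' x y) z = mul' x (mul' y z))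
    (hpre' : ∀ x y z : A',
      star' (star' x y) z - star' x (star' y z) = star' (star' y x) z - star' y (star' x z))
    (hcompat1' : ∀ x y z : A', star' (mul' x y) z = mul' x (star' y z))
    (hcompat2' : ∀ x y z : A',
      mul' (star' x y) z - mul' (star' y x) z = star' x (mul' y z) - star' y (mul' x z))
    -- morphism α' of (A', mul', star')
    (α' : A' →ₗ[K] A')
    (hα'm : ∀ x y : A', α' (mul' x y) = mul' (α' x) (α' y))
    (hα's : ∀ x y : A', α' (star' x y) = star' (α' x) (α' y))
    -- twisted operations on A'
    (mul'α' star'α' : A' → A' → A')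
    (hmul'α' : ∀ x y : A', mul'α' x y = α' (mul' x y))
    (hstar'α' : ∀ x y : A', star'α' x y = α' (star' x y))
    -- morphism f of pre-Lie Poisson algebras commuting with the twists
    (f : A →ₗ[K] A')
    (hfm : ∀ x y : A, f (mul x y) = mul' (f x) (f y))
    (hfs : ∀ x y : A, f (star x y) = star' (f x) (f y))
    (hfα : ∀ x : A, f (α x) = α' (f x)) :
    -- (A, mulα, starα, α) is a Hom-pre-Lie Poisson algebra
    ((∀ x y : A, mulα x y = mulα y x) ∧
     (∀ x y z : A, mulα (mulα x y) (α z) = mulα (α x) (mulα y z)) ∧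
     (∀ x y z : A,
       starα (starα x y) (α z) - starα (α x) (starα y z) =
         starα (starα y x) (α z) - starα (α y) (starα x z)) ∧
     (∀ x y z : A, starα (mulα x y) (α z) = mulα (α x) (starα y z)) ∧
     (∀ x y z : A,
       mulα (starα x y) (α z) - mulα (starα y x) (α z) =
         starα (α x) (mulα y z) - starα (α y) (mulα x z))) ∧
    -- f is a morphism of the twisted Hom-pre-Lie Poisson algebras
    ((∀ x y : A, f (mulα x y) = mul'α' (f x) (f y)) ∧
     (∀ x y : A, f (starα x y) = star'α' (f x) (f y)) ∧
     (∀ x : A, f (α x) = α' (f x))) := by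
  obtain rfl : mulα = yauTwist α (mul · ·) := funext₂ hmulα
  obtain rfl : starα = yauTwist α (star · ·) := funext₂ hstarα
  obtain rfl : mul'α' = yauTwist α' (mul' · ·) := funext₂ hmul'α'
  obtain rfl : star'α' = yauTwist α' (star' · ·) := funext₂ hstar'α'
  have hA : IsHomPreLiePoisson (mul · ·) (star · ·) id :=
    ⟨hcomm, hassoc, hpre, hcompat1, hcompat2⟩
  obtain ⟨hTwist, hf⟩ := yauTwist_preLiePoisson_general hA hαm hαs
    (mul' := (mul' · ·)) (star' := (star' · ·)) hfm hfs .id_right hfα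
  exact ⟨⟨hTwist.mul_comm, hTwist.mul_assoc, hTwist.star_preLie, hTwist.mul_star_assoc,
    hTwist.star_commutator_mul⟩, hf⟩
end

section
/- Let (A,·,∗,α) be a Hom-pre-Lie Poisson algebra and (s,l,r,β,V) a bimodule of it. Then the direct sum A ⊕ V with product (x₁+v₁)·'(x₂+v₂) = x₁·x₂ + s(x₁)v₂ + s(x₂)v₁, product (x₁+v₁)∗'(x₂+v₂) = x₁∗x₂ + l(x₁)v₂ + r(x₂)v₁, and linear map (α⊕β)(x+v) = α(x)+β(v) is a Hom-pre-Lie Poisson algebra. -/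
/-!
The axioms are of two shapes: an associativity `f (g x y) (α z) = h (α x) (k y z)` linking up to
four products, and the identity
`f (g x y) (α z) - f (g y x) (α z) = g (α x) (f y z) - g (α y) (f x z)`, which is the Hom-pre-Lie
identity when `f = g`. In the semidirect product any two elements of `V` multiply to zero, so the
`V`-component of either identity is a sum of terms that each involve a single element of `V`, and
it suffices to compare the terms argument by argument. This gives three conditions for the first
shape; for the second, antisymmetry in the first two arguments leaves two. They are the bimodule
axioms.
-/

/-- The product on `A × V` extending a bilinear product `m` on `A` by a left action `l` and a right
action `r` of `A` on `V`, with the product of any two elements of `V` equal to zero. The right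
action is written with the algebra element first: `r x v` stands for `v · x`. -/
def semidirectMul {R A V : Type*} [CommSemiring R] [AddCommMonoid A] [Module R A]
    [AddCommMonoid V] [Module R V] (m : A →ₗ[R] A →ₗ[R] A) (l r : A →ₗ[R] V →ₗ[R] V) :
    A × V →ₗ[R] A × V →ₗ[R] A × V :=
  LinearMap.mk₂ R (fun u w ↦ (m u.1 w.1, l u.1 w.2 + r w.1 u.2))
    (by simp [add_add_add_comm]) (by simp) (by simp [add_add_add_comm]) (by simp)

section TwistedAssoc

variable {R A V : Type*} [CommSemiring R] [AddCommMonoid A] [Module R A]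
  [AddCommMonoid V] [Module R V]

@[simp]
theorem semidirectMul_apply (m : A →ₗ[R] A →ₗ[R] A) (l r : A →ₗ[R] V →ₗ[R] V) (u w : A × V) :
    semidirectMul m l r u w = (m u.1 w.1, l u.1 w.2 + r w.1 u.2) :=
  rfl

theorem semidirectMul_twisted_assoc {f g h k : A →ₗ[R] A →ₗ[R] A} {α : A → A}
    {lf rf lg rg lh rh lk rk : A →ₗ[R] V →ₗ[R] V} {β : V → V}
    (assoc : ∀ x y z, f (g x y) (α z) = h (α x) (k y z))
    (assoc_left : ∀ x y v, lf (g x y) (β v) = lh (α x) (lk y v))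
    (assoc_middle : ∀ x z v, rf (α z) (lg x v) = lh (α x) (rk z v))
    (assoc_right : ∀ y z v, rf (α z) (rg y v) = rh (k y z) (β v)) (u w t : A × V) :
    semidirectMul f lf rf (semidirectMul g lg rg u w) (Prod.map α β t) =
      semidirectMul h lh rh (Prod.map α β u) (semidirectMul k lk rk w t) := by
  obtain ⟨⟨x, a⟩, ⟨y, b⟩, ⟨z, c⟩⟩ := u, w, t
  simp only [semidirectMul_apply, Prod.map_apply]
  refine Prod.ext (assoc x y z) ?_
  calc lf (g x y) (β c) + rf (α z) (lg x b + rg y a)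
      = lh (α x) (lk y c) + (lh (α x) (rk z b) + rh (k y z) (β a)) := by
        rw [map_add, assoc_left, assoc_middle, assoc_right]
    _ = lh (α x) (lk y c + rk z b) + rh (k y z) (β a) := by
        rw [map_add, add_assoc]

end TwistedAssoc

section HomPreLiePoisson

variable {R A V : Type*} [CommSemiring R] [AddCommGroup A] [Module R A]
  [AddCommGroup V] [Module R V]

theorem semidirectMul_twisted_leftSymm {f g : A →ₗ[R] A →ₗ[R] A} {α : A → A}
    {lf rf lg rg : A →ₗ[R] V →ₗ[R] V} {β : V → V}
    (leftSymm : ∀ x y z,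
      f (g x y) (α z) - f (g y x) (α z) = g (α x) (f y z) - g (α y) (f x z))
    (left_commutator : ∀ x y v,
      lf (g x y - g y x) (β v) = lg (α x) (lf y v) - lg (α y) (lf x v))
    (right_commutator : ∀ x z v,
      rf (α z) (lg x v - rg x v) = lg (α x) (rf z v) - rg (f x z) (β v)) (u w t : A × V) :
    semidirectMul f lf rf (semidirectMul g lg rg u w) (Prod.map α β t) -
        semidirectMul f lf rf (semidirectMul g lg rg w u) (Prod.map α β t) =
      semidirectMul g lg rg (Prod.map α β u) (semidirectMul f lf rf w t) -
        semidirectMul g lg rg (Prod.map α β w) (semidirectMul f lf rf u t) := by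
  obtain ⟨⟨x, a⟩, ⟨y, b⟩, ⟨z, c⟩⟩ := u, w, t
  simp only [semidirectMul_apply, Prod.map_apply]
  refine Prod.ext (leftSymm x y z) ?_
  calc lf (g x y) (β c) + rf (α z) (lg x b + rg y a) -
        (lf (g y x) (β c) + rf (α z) (lg y a + rg x b))
      = lf (g x y - g y x) (β c) + rf (α z) (lg x b - rg x b) - rf (α z) (lg y a - rg y a) := by
        simp only [map_add, map_sub, LinearMap.sub_apply]
        abel
    _ = (lg (α x) (lf y c) - lg (α y) (lf x c)) + (lg (α x) (rf z b) - rg (f x z) (β b)) -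
        (lg (α y) (rf z a) - rg (f y z) (β a)) := by
        rw [left_commutator, right_commutator, right_commutator]
    _ = lg (α x) (lf y c + rf z b) + rg (f y z) (β a) -
        (lg (α y) (lf x c + rf z a) + rg (f x z) (β b)) := by
        simp only [map_add]
        abel

/-- `(A, mul, star, α)` is a Hom-pre-Lie Poisson algebra. The twisting map `α` is an arbitrary
function. -/
structure IsHomPreLiePoisson_s16 (mul star : A →ₗ[R] A →ₗ[R] A) (α : A → A) : Prop where
  mul_comm : ∀ x y, mul x y = mul y x
  mul_assoc : ∀ x y z, mul (mul x y) (α z) = mul (α x) (mul y z)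
  star_leftSymm : ∀ x y z,
    star (star x y) (α z) - star (α x) (star y z) = star (star y x) (α z) - star (α y) (star x z)
  star_mul : ∀ x y z, star (mul x y) (α z) = mul (α x) (star y z)
  mul_commutator : ∀ x y z,
    mul (star x y) (α z) - mul (star y x) (α z) = star (α x) (mul y z) - star (α y) (mul x z)

/-- The bimodule identities for `(s, l, r, β, V)` over `(A, mul, star, α)`: here `s` is the action
for `mul`, and `l`, `r` are the left and right actions for `star`. Just as `IsHomPreLiePoisson` does
not make `α` multiplicative, `β` is not made to intertwine the actions. -/
structure IsHomPreLiePoissonBimodule (mul star : A →ₗ[R] A →ₗ[R] A) (α : A → A)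
    (s l r : A →ₗ[R] V →ₗ[R] V) (β : V → V) : Prop where
  s_mul : ∀ x y v, s (mul x y) (β v) = s (α x) (s y v)
  l_commutator : ∀ x y v, l (star x y - star y x) (β v) = l (α x) (l y v) - l (α y) (l x v)
  r_l_sub_r : ∀ x y v, r (α y) (l x v - r x v) = l (α x) (r y v) - r (star x y) (β v)
  l_mul : ∀ x y v, l (mul x y) (β v) = s (α x) (l y v)
  r_s_eq_s_star : ∀ x y v, r (α y) (s x v) = s (star x y) (β v)
  r_s_eq_s_r : ∀ x y v, r (α y) (s x v) = s (α x) (r y v)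
  s_commutator : ∀ x y v, s (star x y - star y x) (β v) = l (α x) (s y v) - l (α y) (s x v)
  s_l_sub_r : ∀ x y v, s (α y) (l x v - r x v) = l (α x) (s y v) - r (mul x y) (β v)

theorem semidirect_homPreLiePoisson_general {mul star : A →ₗ[R] A →ₗ[R] A} {α : A → A}
    {s l r : A →ₗ[R] V →ₗ[R] V} {β : V → V} (hA : IsHomPreLiePoisson_s16 mul star α)
    (hV : IsHomPreLiePoissonBimodule mul star α s l r β) :
    IsHomPreLiePoisson_s16 (semidirectMul mul s s) (semidirectMul star l r) (Prod.map α β) where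
  mul_comm u w := Prod.ext (hA.mul_comm u.1 w.1) (add_comm _ _)
  mul_assoc := by
    have s_s_eq_s_mul (y z : A) (v : V) : s (α z) (s y v) = s (mul y z) (β v) := by
      rw [← hV.s_mul, hA.mul_comm]
    have s_s_comm (x z : A) (v : V) : s (α z) (s x v) = s (α x) (s z v) := by
      rw [s_s_eq_s_mul, hV.s_mul]
    exact semidirectMul_twisted_assoc hA.mul_assoc hV.s_mul s_s_comm s_s_eq_s_mul
  star_leftSymm u w t :=
    sub_eq_sub_iff_sub_eq_sub.mp <| semidirectMul_twisted_leftSymm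
      (fun x y z ↦ sub_eq_sub_iff_sub_eq_sub.mp (hA.star_leftSymm x y z))
      hV.l_commutator hV.r_l_sub_r u w t
  star_mul := semidirectMul_twisted_assoc hA.star_mul hV.l_mul hV.r_s_eq_s_r hV.r_s_eq_s_star
  mul_commutator :=
    semidirectMul_twisted_leftSymm hA.mul_commutator hV.s_commutator hV.s_l_sub_r

end HomPreLiePoisson

/-- The semidirect sum of a Hom-pre-Lie Poisson algebra with a
bimodule is a Hom-pre-Lie Poisson algebra. -/
theorem semidirect_homPreLiePoisson
    {K A V : Type*} [Field K] [CharZero K]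
    [AddCommGroup A] [Module K A] [AddCommGroup V] [Module K V]
    -- Hom-pre-Lie Poisson algebra (A, mul, star, α)
    (mul : A →ₗ[K] A →ₗ[K] A) (star : A →ₗ[K] A →ₗ[K] A) (α : A →ₗ[K] A)
    (hcomm : ∀ x y : A, mul x y = mul y x)
    (hassoc : ∀ x y z : A, mul (mul x y) (α z) = mul (α x) (mul y z))
    (hpre : ∀ x y z : A,
      star (star x y) (α z) - star (α x) (star y z) =
        star (star y x) (α z) - star (α y) (star x z))
    (hcompat1 : ∀ x y z : A, star (mul x y) (α z) = mul (α x) (star y z))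
    (hcompat2 : ∀ x y z : A,
      mul (star x y) (α z) - mul (star y x) (α z) =
        star (α x) (mul y z) - star (α y) (mul x z))
    -- bimodule (s, l, r, β, V)
    (s l r : A →ₗ[K] V →ₗ[K] V) (β : V →ₗ[K] V)
    (hs1 : ∀ (x y : A) (v : V), s (mul x y) (β v) = s (α x) (s y v))
    (hs2 : ∀ (x : A) (v : V), β (s x v) = s (α x) (β v))
    (hl : ∀ (x y : A) (v : V),
      l (star x y - star y x) (β v) = l (α x) (l y v) - l (α y) (l x v))
    (hr : ∀ (x y : A) (v : V),
      r (α y) (l x v - r x v) = l (α x) (r y v) - r (star x y) (β v))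
    (hβl : ∀ (x : A) (v : V), β (l x v) = l (α x) (β v))
    (hβr : ∀ (x : A) (v : V), β (r x v) = r (α x) (β v))
    (hc1 : ∀ (x y : A) (v : V), l (mul x y) (β v) = s (α x) (l y v))
    (hc2 : ∀ (x y : A) (v : V), r (α y) (s x v) = s (star x y) (β v))
    (hc3 : ∀ (x y : A) (v : V), r (α y) (s x v) = s (α x) (r y v))
    (hc4 : ∀ (x y : A) (v : V),
      s (star x y - star y x) (β v) = l (α x) (s y v) - l (α y) (s x v))
    (hc5 : ∀ (x y : A) (v : V),
      s (α y) (l x v - r x v) = l (α x) (s y v) - r (mul x y) (β v))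
    -- operations on the direct sum A × V
    (mul' star' : (A × V) → (A × V) → (A × V)) (αβ : (A × V) → (A × V))
    (hmul' : ∀ u w : A × V, mul' u w = (mul u.1 w.1, s u.1 w.2 + s w.1 u.2))
    (hstar' : ∀ u w : A × V, star' u w = (star u.1 w.1, l u.1 w.2 + r w.1 u.2))
    (hαβ : ∀ u : A × V, αβ u = (α u.1, β u.2)) :
    (∀ u w : A × V, mul' u w = mul' w u) ∧
    (∀ u w t : A × V, mul' (mul' u w) (αβ t) = mul' (αβ u) (mul' w t)) ∧
    (∀ u w t : A × V,
      star' (star' u w) (αβ t) - star' (αβ u) (star' w t) =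
        star' (star' w u) (αβ t) - star' (αβ w) (star' u t)) ∧
    (∀ u w t : A × V, star' (mul' u w) (αβ t) = mul' (αβ u) (star' w t)) ∧
    (∀ u w t : A × V,
      mul' (star' u w) (αβ t) - mul' (star' w u) (αβ t) =
        star' (αβ u) (mul' w t) - star' (αβ w) (mul' u t)) := by
  obtain rfl : mul' = fun u w ↦ semidirectMul mul s s u w := funext₂ hmul'
  obtain rfl : star' = fun u w ↦ semidirectMul star l r u w := funext₂ hstar'
  obtain rfl : αβ = Prod.map α β := funext hαβ
  have ⟨mul_comm, mul_assoc, star_leftSymm, star_mul, mul_commutator⟩ :=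
    semidirect_homPreLiePoisson_general ⟨hcomm, hassoc, hpre, hcompat1, hcompat2⟩
      ⟨hs1, hl, hr, hc1, hc2, hc3, hc4, hc5⟩
  exact ⟨mul_comm, mul_assoc, star_leftSymm, star_mul, mul_commutator⟩
end
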